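/- Let (f_j) be a sequence of measurable functions from ℝ⁴ to ℝ such that for some constant C one has |f_j(z)| ≤ C for all j and all z, and such that for every δ > 0, f_j converges to 0 uniformly on {z ∈ ℝ⁴ : ‖z‖ ≥ δ}. Let (t_j) be a sequence of positive reals with t_j → ∞, let M > 0, and let i ∈ {1,2,3,4}. Then t_j² · ∫_{‖z‖ > M/t_j} (2 t_j z_i/(1 + t_j² ‖z‖²))² · ((t_j² ‖z‖² − 1)/(t_j² ‖z‖² + 1)) · f_j(z) · (2/(1+‖z‖²))⁴ dz → 0 as j → ∞. -/

import Mathlib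

open MeasureTheory Filter

lemma aux_integrable : Integrable (fun z : EuclideanSpace ℝ (Fin 4) =>
    (‖z‖ ^ 2)⁻¹ * ((1 + ‖z‖ ^ 2) ^ 4)⁻¹) := by
  have h := integrable_fun_norm_addHaar (volume : Measure (EuclideanSpace ℝ (Fin 4)))
    (f := fun y : ℝ => (y ^ 2)⁻¹ * ((1 + y ^ 2) ^ 4)⁻¹)
  rw [h]
  refine Integrable.mono' (g := fun y : ℝ => (1 + y ^ 2)⁻¹)
    integrable_inv_one_add_sq.integrableOn ?_ ?_
  · apply Measurable.aestronglyMeasurable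
    fun_prop
  · refine (ae_restrict_iff' measurableSet_Ioi).2 (Eventually.of_forall fun y hy => ?_)
    have hy : 0 < y := hy
    simp only [finrank_euclideanSpace, Fintype.card_fin, smul_eq_mul]
    rw [Real.norm_of_nonneg (by positivity)]
    have e : y ^ (4 - 1) * ((y ^ 2)⁻¹ * ((1 + y ^ 2) ^ 4)⁻¹) = y / (1 + y ^ 2) ^ 4 := by
      norm_num
      field_simp
    rw [e, inv_eq_one_div, div_le_div_iff₀ (by positivity) (by positivity)]
    have h1 : y ≤ 1 + y ^ 2 := by nlinarith [sq_nonneg (y - 1)]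
    have h2 : (1 : ℝ) ≤ (1 + y ^ 2) ^ 2 := one_le_pow₀ (by nlinarith)
    have h3 : 0 < 1 + y ^ 2 := by positivity
    calc y * (1 + y ^ 2) ≤ (1 + y ^ 2) * (1 + y ^ 2) := by gcongr
      _ ≤ (1 + y ^ 2) * (1 + y ^ 2) * (1 + y ^ 2) ^ 2 := le_mul_of_one_le_right (by positivity) h2
      _ = 1 * (1 + y ^ 2) ^ 4 := by ring

lemma aux_bound (z : EuclideanSpace ℝ (Fin 4)) (i : Fin 4) (t a : ℝ) :
    |t ^ 2 * ((2 * t * z i / (1 + t ^ 2 * ‖z‖ ^ 2)) ^ 2 *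
          ((t ^ 2 * ‖z‖ ^ 2 - 1) / (t ^ 2 * ‖z‖ ^ 2 + 1)) *
          a * (2 / (1 + ‖z‖ ^ 2)) ^ 4)| ≤
      64 * ((‖z‖ ^ 2)⁻¹ * ((1 + ‖z‖ ^ 2) ^ 4)⁻¹) * |a| := by
  have hz : |z i| ≤ ‖z‖ := by simpa using PiLp.norm_apply_le z i
  generalize z i = x at *
  generalize ‖z‖ = r at *
  have hr : 0 ≤ r := (abs_nonneg _).trans hz
  rcases hr.eq_or_lt with h0 | hr
  · subst h0
    have : x = 0 := by simpa using hz
    simp [this]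
  have hx : x ^ 2 ≤ r ^ 2 := sq_le_sq.2 (by rwa [abs_of_pos hr])
  have hq : |(t ^ 2 * r ^ 2 - 1) / (t ^ 2 * r ^ 2 + 1)| ≤ 1 := by
    have : 0 ≤ t ^ 2 * r ^ 2 := by positivity
    rw [abs_div, abs_of_pos (by positivity : 0 < t ^ 2 * r ^ 2 + 1), div_le_one (by positivity),
      abs_le]
    constructor <;> linarith
  have hA : t ^ 2 * (2 * t * x / (1 + t ^ 2 * r ^ 2)) ^ 2 ≤ 4 * (r ^ 2)⁻¹ := by
    rw [div_pow, ← mul_div_assoc, ← div_eq_mul_inv, div_le_div_iff₀ (by positivity) (by positivity)]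
    have h0 : 0 ≤ t ^ 2 * r ^ 2 := by positivity
    calc t ^ 2 * (2 * t * x) ^ 2 * r ^ 2 = 4 * (t ^ 4 * r ^ 2) * x ^ 2 := by ring
      _ ≤ 4 * (t ^ 4 * r ^ 2) * r ^ 2 := by gcongr
      _ = 4 * (t ^ 2 * r ^ 2) ^ 2 := by ring
      _ ≤ 4 * (1 + t ^ 2 * r ^ 2) ^ 2 := by gcongr; linarith
  have hA0 : 0 ≤ t ^ 2 * (2 * t * x / (1 + t ^ 2 * r ^ 2)) ^ 2 := by positivity
  have hW : (2 / (1 + r ^ 2)) ^ 4 = 16 * ((1 + r ^ 2) ^ 4)⁻¹ := by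
    rw [div_pow, div_eq_mul_inv]; norm_num
  have e : ∀ p q b c d : ℝ, p * (q * b * c * d) = (p * q) * b * c * d := by intros; ring
  rw [e, hW, abs_mul, abs_mul, abs_mul, abs_of_nonneg hA0,
    abs_of_nonneg (by positivity : 0 ≤ 16 * ((1 + r ^ 2) ^ 4)⁻¹)]
  calc _ ≤ 4 * (r ^ 2)⁻¹ * 1 * |a| * (16 * ((1 + r ^ 2) ^ 4)⁻¹) := by gcongr
    _ = _ := by ring

/-- Estimate (out2'): if `f_j` is uniformly bounded and converges to `0` uniformly
away from the origin, and `t_j → ∞`, then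
`t_j² ∫_{‖z‖ > M/t_j} (2 t_j z_i/(1+t_j²‖z‖²))² ((t_j²‖z‖²−1)/(t_j²‖z‖²+1)) f_j
(2/(1+‖z‖²))⁴ dz → 0`. -/
theorem second_moment_error_limit
    (f : ℕ → EuclideanSpace ℝ (Fin 4) → ℝ) (C : ℝ)
    (hmeas : ∀ j, Measurable (f j))
    (hbd : ∀ j z, |f j z| ≤ C)
    (hconv : ∀ δ : ℝ, 0 < δ →
      TendstoUniformlyOn (fun j z => f j z) (fun _ => 0) atTop
        {z : EuclideanSpace ℝ (Fin 4) | δ ≤ ‖z‖})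
    (t : ℕ → ℝ) (ht : ∀ j, 0 < t j) (htop : Tendsto t atTop atTop)
    (M : ℝ) (hM : 0 < M) (i : Fin 4) :
    Tendsto
      (fun j => (t j) ^ 2 * ∫ z in {z : EuclideanSpace ℝ (Fin 4) | M / t j < ‖z‖},
        (2 * t j * z i / (1 + (t j) ^ 2 * ‖z‖ ^ 2)) ^ 2 *
          (((t j) ^ 2 * ‖z‖ ^ 2 - 1) / ((t j) ^ 2 * ‖z‖ ^ 2 + 1)) *
          f j z * (2 / (1 + ‖z‖ ^ 2)) ^ 4)
      atTop (nhds 0) := by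
  simp_rw [← integral_const_mul]
  have hS : ∀ j, MeasurableSet {z : EuclideanSpace ℝ (Fin 4) | M / t j < ‖z‖} := fun j =>
    measurableSet_lt measurable_const measurable_norm
  simp_rw [← integral_indicator (hS _)]
  have key := tendsto_integral_of_dominated_convergence
    (μ := (volume : Measure (EuclideanSpace ℝ (Fin 4))))
    (F := fun j => Set.indicator {z : EuclideanSpace ℝ (Fin 4) | M / t j < ‖z‖}
      (fun z => t j ^ 2 * ((2 * t j * z i / (1 + (t j) ^ 2 * ‖z‖ ^ 2)) ^ 2 *
          (((t j) ^ 2 * ‖z‖ ^ 2 - 1) / ((t j) ^ 2 * ‖z‖ ^ 2 + 1)) *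
          f j z * (2 / (1 + ‖z‖ ^ 2)) ^ 4)))
    (f := fun _ => (0 : ℝ))
    (fun z => 64 * ((‖z‖ ^ 2)⁻¹ * ((1 + ‖z‖ ^ 2) ^ 4)⁻¹) * C) ?_
    ((aux_integrable.const_mul 64).mul_const C) ?_ ?_
  · simpa using key
  · intro j
    have := hmeas j
    apply Measurable.aestronglyMeasurable
    apply Measurable.indicator _ (hS j)
    fun_prop
  · intro j
    refine Eventually.of_forall fun z => (norm_indicator_le_norm_self _ _).trans ?_
    refine (aux_bound z i (t j) (f j z)).trans ?_
    have := hbd j z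
    gcongr
  · refine Eventually.of_forall fun z => ?_
    have hlim : Tendsto (fun j => 64 * ((‖z‖ ^ 2)⁻¹ * ((1 + ‖z‖ ^ 2) ^ 4)⁻¹) * |f j z|)
        atTop (nhds 0) := by
      rcases (norm_nonneg z).eq_or_lt with h0 | h0
      · simp [← h0]
      · have h1 := (hconv ‖z‖ h0).tendsto_at (x := z) (le_refl ‖z‖)
        simpa using (h1.abs).const_mul (64 * ((‖z‖ ^ 2)⁻¹ * ((1 + ‖z‖ ^ 2) ^ 4)⁻¹))
    refine squeeze_zero_norm (fun j => ?_) hlim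
    exact (norm_indicator_le_norm_self _ _).trans (aux_bound z i (t j) (f j z))
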